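/- arXiv:1312.4147 — 2 statements merged into one kernel-verified Lean document; each statement's English description precedes it below -/
import Mathlib

section
/- Let W ⊂ P^2 be a line count configuration of type (1, 2, 3, …, t) over an algebraically closed field k of characteristic 0. Then for every integer r ≥ 1, α((2r−1)W) ≥ r·α(W) + (r−1). -/
open scoped LinearAlgebra.Projectivization

/-- The homogeneous ideal of a point `P` of `ℙ²`: all polynomials vanishing on the
line through the origin corresponding to `P`. -/
noncomputable def pointIdeal (k : Type*) [Field k] (P : ℙ k (Fin 3 → k)) :
    Ideal (MvPolynomial (Fin 3) k) where
  carrier := {f | ∀ c : k, MvPolynomial.eval (c • P.rep) f = 0}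
  zero_mem' := by intro c; simp
  add_mem' := by
    intro a b ha hb c
    simp [ha c, hb c]
  smul_mem' := by
    intro r f hf c
    simp [smul_eq_mul, hf c]

/-- The defining ideal `I_{mW} = ⋂_{P ∈ W} I_P^m` of the fat point scheme `mW`. -/
noncomputable def fatIdeal (k : Type*) [Field k] (W : Finset (ℙ k (Fin 3 → k))) (m : ℕ) :
    Ideal (MvPolynomial (Fin 3) k) :=
  ⨅ P ∈ W, (pointIdeal k P) ^ m

/-- `α(I)`: the least degree `d` such that `I` contains a nonzero homogeneous
polynomial of degree `d`. -/
noncomputable def alphaDeg (k : Type*) [Field k] (I : Ideal (MvPolynomial (Fin 3) k)) : ℕ :=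
  sInf {d : ℕ | ∃ f ∈ I, f ≠ 0 ∧ MvPolynomial.IsHomogeneous f d}

open MvPolynomial in
/-- The expansion of a polynomial along `v + X • (x₀, x₁, x₂)`, as a polynomial in `X`. -/
noncomputable def expandAt {k : Type*} [Field k] (v : Fin 3 → k) :
    MvPolynomial (Fin 3) k →ₐ[k] Polynomial (MvPolynomial (Fin 3) k) :=
  aeval fun i => Polynomial.C (C (v i)) + Polynomial.X * Polynomial.C (X i)

/-- `f` vanishes to order at least `m` along the punctured line of `k³` representing `P`. -/
def VanishesToOrder {k : Type*} [Field k] (P : ℙ k (Fin 3 → k)) (m : ℕ)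
    (f : MvPolynomial (Fin 3) k) : Prop :=
  ∀ c : k, c ≠ 0 → (Polynomial.X : Polynomial (MvPolynomial (Fin 3) k)) ^ m ∣
    expandAt (c • P.rep) f

section

variable {k : Type*} [Field k]

theorem exists_eq_sum_of_isHomogeneous_one {φ : MvPolynomial (Fin 3) k}
    (h : φ.IsHomogeneous 1) :
    ∃ a : Fin 3 → k, φ = ∑ i, MvPolynomial.C (a i) * MvPolynomial.X i := by
  rw [← MvPolynomial.mem_homogeneousSubmodule,
    MvPolynomial.homogeneousSubmodule_one_eq_span_X, Submodule.mem_span_range_iff_exists_fun] at h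
  obtain ⟨a, rfl⟩ := h
  exact ⟨a, by simp [MvPolynomial.smul_eq_C_mul]⟩

theorem exists_linearMap_eval_eq {φ : MvPolynomial (Fin 3) k} (h : φ.IsHomogeneous 1) :
    ∃ ψ : (Fin 3 → k) →ₗ[k] k, ∀ u, MvPolynomial.eval u φ = ψ u := by
  obtain ⟨a, rfl⟩ := exists_eq_sum_of_isHomogeneous_one h
  exact ⟨∑ i, a i • LinearMap.proj i, fun u => by simp⟩

theorem expandAt_eq_of_isHomogeneous_one {φ : MvPolynomial (Fin 3) k}
    (h : φ.IsHomogeneous 1) (v : Fin 3 → k) :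
    expandAt v φ = Polynomial.C (MvPolynomial.C (MvPolynomial.eval v φ)) +
      Polynomial.X * Polynomial.C φ := by
  obtain ⟨a, rfl⟩ := exists_eq_sum_of_isHomogeneous_one h
  have hC : ∀ c : k, expandAt v (MvPolynomial.C c) = Polynomial.C (MvPolynomial.C c) := by
    intro c
    simp [expandAt, Polynomial.algebraMap_apply, MvPolynomial.algebraMap_eq]
  have hX : ∀ i, expandAt v (MvPolynomial.X i) =
      Polynomial.C (MvPolynomial.C (v i)) + Polynomial.X * Polynomial.C (MvPolynomial.X i) := by
    intro i
    simp [expandAt]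
  simp only [map_sum, map_mul, hC, hX, MvPolynomial.eval_C, MvPolynomial.eval_X,
    Finset.mul_sum, ← Finset.sum_add_distrib]
  exact Finset.sum_congr rfl fun i _ => by ring

theorem eval_zero_expandAt (v : Fin 3 → k) (f : MvPolynomial (Fin 3) k) :
    (expandAt v f).eval 0 = MvPolynomial.C (MvPolynomial.eval v f) := by
  have : (Polynomial.evalRingHom (0 : MvPolynomial (Fin 3) k)).comp
      (expandAt v : MvPolynomial (Fin 3) k →+* Polynomial (MvPolynomial (Fin 3) k)) =
      MvPolynomial.C.comp (MvPolynomial.eval v) := by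
    apply MvPolynomial.ringHom_ext
    · intro c
      simp [expandAt, Polynomial.algebraMap_apply, MvPolynomial.algebraMap_eq]
    · intro i
      simp [expandAt]
  exact DFunLike.congr_fun this f

theorem vanishesToOrder_of_mem_pow {P : ℙ k (Fin 3 → k)} {m : ℕ}
    {f : MvPolynomial (Fin 3) k} (hf : f ∈ pointIdeal k P ^ m) : VanishesToOrder P m f := by
  intro c _
  rw [← Ideal.mem_span_singleton, ← Ideal.span_singleton_pow]
  have hle : pointIdeal k P ≤ (Ideal.span {Polynomial.X}).comap (expandAt (c • P.rep)) := by
    intro g hg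
    rw [Ideal.mem_comap, Ideal.mem_span_singleton, Polynomial.X_dvd_iff,
      Polynomial.coeff_zero_eq_eval_zero, eval_zero_expandAt, hg c, map_zero]
  exact Ideal.le_comap_pow _ m (Ideal.pow_right_mono hle m hf)

theorem VanishesToOrder.of_linear_mul {P : ℙ k (Fin 3 → k)} {m : ℕ}
    {φ g : MvPolynomial (Fin 3) k} (h1 : φ.IsHomogeneous 1)
    (hP : MvPolynomial.eval P.rep φ ≠ 0) (h : VanishesToOrder P m (φ * g)) :
    VanishesToOrder P m g := by
  intro c hc
  have h2 := h c hc
  rw [map_mul] at h2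
  refine Polynomial.prime_X.pow_dvd_of_dvd_mul_left m ?_ h2
  obtain ⟨ψ, hψ⟩ := exists_linearMap_eval_eq h1
  rw [Polynomial.X_dvd_iff, Polynomial.coeff_zero_eq_eval_zero, eval_zero_expandAt,
    MvPolynomial.C_eq_zero, hψ, map_smul, ← hψ]
  exact mul_ne_zero hc hP

theorem VanishesToOrder.pred_of_linear_mul {P : ℙ k (Fin 3 → k)} {m : ℕ}
    {φ g : MvPolynomial (Fin 3) k} (h1 : φ.IsHomogeneous 1) (h0 : φ ≠ 0)
    (hP : MvPolynomial.eval P.rep φ = 0) (h : VanishesToOrder P m (φ * g)) :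
    VanishesToOrder P (m - 1) g := by
  intro c hc
  rcases m with _ | m
  · simp
  have h2 := h c hc
  obtain ⟨ψ, hψ⟩ := exists_linearMap_eval_eq h1
  rw [map_mul, expandAt_eq_of_isHomogeneous_one h1, hψ, map_smul, ← hψ, hP, smul_zero, map_zero,
    map_zero, zero_add, mul_assoc, pow_succ', mul_dvd_mul_iff_left Polynomial.X_ne_zero] at h2
  refine Polynomial.prime_X.pow_dvd_of_dvd_mul_left m ?_ h2
  rw [Polynomial.X_dvd_iff, Polynomial.coeff_C_zero]
  exact h0

/-- The restriction of a polynomial to the affine line `u + X • w`. -/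
noncomputable def restrictLine (u w : Fin 3 → k) :
    MvPolynomial (Fin 3) k →ₐ[k] Polynomial k :=
  MvPolynomial.aeval fun i => Polynomial.C (u i) + Polynomial.X * Polynomial.C (w i)

theorem eval_restrictLine (u w : Fin 3 → k) (z : k) (f : MvPolynomial (Fin 3) k) :
    (restrictLine u w f).eval z = MvPolynomial.eval (u + z • w) f := by
  have : (Polynomial.evalRingHom z).comp
      (restrictLine u w : MvPolynomial (Fin 3) k →+* Polynomial k) =
      MvPolynomial.eval (u + z • w) := by
    apply MvPolynomial.ringHom_ext
    · intro c
      simp [restrictLine]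
    · intro i
      simp [restrictLine, mul_comm z]
  exact DFunLike.congr_fun this f

theorem natDegree_restrictLine_le (u w : Fin 3 → k) (f : MvPolynomial (Fin 3) k) :
    (restrictLine u w f).natDegree ≤ f.totalDegree := by
  refine (MvPolynomial.aeval_natDegree_le f le_rfl _ (n := 1) fun i => ?_).trans_eq (mul_one _)
  compute_degree

theorem X_sub_C_pow_dvd_restrictLine {u v w : Fin 3 → k} {z : k} (hv : v = u + z • w) {m : ℕ}
    {f : MvPolynomial (Fin 3) k} (h : Polynomial.X ^ m ∣ expandAt v f) :
    (Polynomial.X - Polynomial.C z) ^ m ∣ restrictLine u w f := by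
  let ρ := Polynomial.eval₂RingHom (Polynomial.C.comp (MvPolynomial.eval w))
    (Polynomial.X - Polynomial.C z)
  have hρ : ρ.comp (expandAt v : MvPolynomial (Fin 3) k →+* _) =
      (restrictLine u w : MvPolynomial (Fin 3) k →+* Polynomial k) := by
    apply MvPolynomial.ringHom_ext
    · intro c
      simp [ρ, restrictLine, expandAt, Polynomial.algebraMap_apply, MvPolynomial.algebraMap_eq]
    · intro i
      simp [ρ, restrictLine, expandAt, hv]
      ring
  have h2 := map_dvd ρ h
  have h3 : ρ (expandAt v f) = restrictLine u w f := DFunLike.congr_fun hρ f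
  rw [h3, map_pow] at h2
  simpa [ρ] using h2

theorem linear_dvd_of_forall_eval_eq_zero [Infinite k] {φ f : MvPolynomial (Fin 3) k}
    (h1 : φ.IsHomogeneous 1) (h0 : φ ≠ 0)
    (h : ∀ u, MvPolynomial.eval u φ = 0 → MvPolynomial.eval u f = 0) : φ ∣ f := by
  obtain ⟨ψ, hψ⟩ := exists_linearMap_eval_eq h1
  obtain ⟨b, hb⟩ : ∃ b, ψ b = 1 := by
    apply LinearMap.surjective
    rintro rfl
    exact h0 (MvPolynomial.funext fun u => by simp [hψ])
  let σ : MvPolynomial (Fin 3) k →ₐ[k] MvPolynomial (Fin 3) k :=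
    MvPolynomial.aeval fun i => MvPolynomial.X i - MvPolynomial.C (b i) * φ
  have hσ : σ f = 0 := by
    apply MvPolynomial.funext
    intro u
    have h2 : (MvPolynomial.eval u).comp (σ : MvPolynomial (Fin 3) k →+* _) =
        MvPolynomial.eval (u - ψ u • b) := by
      apply MvPolynomial.ringHom_ext
      · intro c
        simp [σ]
      · intro i
        simp [σ, hψ, mul_comm]
    have h3 : MvPolynomial.eval u (σ f) = MvPolynomial.eval (u - ψ u • b) f :=
      DFunLike.congr_fun h2 f
    rw [h3, map_zero]
    exact h _ (by simp [hψ, hb])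
  have hmk : (Ideal.Quotient.mkₐ k (Ideal.span {φ})).comp σ =
      Ideal.Quotient.mkₐ k (Ideal.span {φ}) := by
    apply MvPolynomial.algHom_ext
    intro i
    have : Ideal.Quotient.mk (Ideal.span {φ}) φ = 0 :=
      Ideal.Quotient.eq_zero_iff_mem.2 (Ideal.mem_span_singleton_self φ)
    simp [σ, this]
  rw [← Ideal.mem_span_singleton, ← Ideal.Quotient.eq_zero_iff_mem]
  have h4 := DFunLike.congr_fun hmk f
  simpa [hσ] using h4.symm

/-- A plane has a basis whose second vector is no multiple of any of finitely many given ones. -/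
theorem exists_basis_avoiding [Infinite k] {V : Type*} [AddCommGroup V] [Module k V]
    (hV : Module.finrank k V = 2) (S : Finset V) :
    ∃ u w : V, (∀ v ∈ S, ∀ a : k, a • v ≠ w) ∧ (∀ v, ∃ a b : k, a • u + b • w = v) := by
  classical
  have : FiniteDimensional k V := Module.finite_of_finrank_pos (by omega)
  have key : ∀ v : V, Submodule.span k {v} ≠ ⊤ := by
    intro v hv
    have h1 := finrank_span_le_card (R := k) ({v} : Set V)
    rw [hv, finrank_top, hV] at h1
    simp at h1
  have avoid : ∀ S : Finset V, ∃ w, ∀ v ∈ S, ∀ a : k, a • v ≠ w := by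
    intro S
    have h1 : (⊤ : Submodule k V) ∉ S.image fun v => Submodule.span k {v} := by
      simpa using fun v _ => key v
    have h2 := Subspace.biUnion_ne_univ_of_top_notMem h1
    obtain ⟨w, hw⟩ := (Set.ne_univ_iff_exists_notMem _).1 h2
    refine ⟨w, fun v hv a ha => hw ?_⟩
    simp only [Set.mem_iUnion]
    exact ⟨_, Finset.mem_image_of_mem _ hv, Submodule.mem_span_singleton.2 ⟨a, ha⟩⟩
  obtain ⟨w, hw⟩ := avoid (insert 0 S)
  have hw0 : w ≠ 0 := fun h => hw 0 (by simp) 0 (by simp [h])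
  obtain ⟨u, hu⟩ := avoid {w}
  refine ⟨u, w, fun v hv => hw v (by simp [hv]), fun v => ?_⟩
  have hli : LinearIndependent k ![w, u] :=
    (LinearIndependent.pair_iff' hw0).2 (hu w (by simp))
  have htop := hli.span_eq_top_of_card_eq_finrank' (by simp [hV])
  have hv : v ∈ Submodule.span k {w, u} := by
    have : Set.range ![w, u] = {w, u} := by simp [Set.pair_comm]
    rw [← this, htop]
    trivial
  obtain ⟨a, b, h⟩ := Submodule.mem_span_pair.1 hv
  exact ⟨b, a, by rw [← h, add_comm]⟩

/-- Bézout's theorem for a line: a curve meeting a line with total multiplicity larger than its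
degree contains the line. -/
theorem linear_dvd_of_vanishesToOrder [Infinite k] {φ f : MvPolynomial (Fin 3) k}
    (h1 : φ.IsHomogeneous 1) (h0 : φ ≠ 0) (T : Finset (ℙ k (Fin 3 → k))) (m : ℕ)
    (hT : ∀ P ∈ T, MvPolynomial.eval P.rep φ = 0) (hf : ∀ P ∈ T, VanishesToOrder P m f)
    (hd : f.totalDegree < T.card * m) : φ ∣ f := by
  classical
  apply linear_dvd_of_forall_eval_eq_zero h1 h0
  obtain ⟨ψ, hψ⟩ := exists_linearMap_eval_eq h1
  have hψ0 : ψ ≠ 0 := by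
    rintro rfl
    exact h0 (MvPolynomial.funext fun u => by simp [hψ])
  have hrank : Module.finrank k (LinearMap.ker ψ) = 2 := by
    have := Module.Dual.finrank_ker_add_one_of_ne_zero (f := ψ) hψ0
    rw [Module.finrank_fin_fun] at this
    omega
  have hker : ∀ P : T, P.1.rep ∈ LinearMap.ker ψ := fun P => by
    rw [LinearMap.mem_ker, ← hψ, hT P.1 P.2]
  obtain ⟨⟨u, hu⟩, ⟨w, hw⟩, hav, hspan⟩ := exists_basis_avoiding hrank
    (Finset.univ.image fun P : T => (⟨P.1.rep, hker P⟩ : LinearMap.ker ψ))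
  have hspan' : ∀ v, ψ v = 0 → ∃ a b : k, v = a • u + b • w := by
    intro v hv
    obtain ⟨a, b, h⟩ := hspan ⟨v, hv⟩
    exact ⟨a, b, (congrArg Subtype.val h).symm⟩
  have hex : ∀ P : T, ∃ a b : k, a ≠ 0 ∧ P.1.rep = a • u + b • w := by
    intro P
    obtain ⟨a, b, h⟩ := hspan' P.1.rep (hker P)
    refine ⟨a, b, ?_, h⟩
    rintro rfl
    have hb : b ≠ 0 := by
      rintro rfl
      exact P.1.rep_nonzero (by simpa using h)
    refine hav _ (Finset.mem_image_of_mem _ (Finset.mem_univ P)) b⁻¹ (Subtype.ext ?_)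
    simp [h, hb]
  choose A B hA hAB using hex
  have hgen : ∀ a b : k, a ≠ 0 → MvPolynomial.eval (a • u + b • w) f = 0 := by
    intro a b ha
    have hinj : Function.Injective fun P : T => a / A P * B P := by
      intro P Q hPQ
      have hPQ' : (A P)⁻¹ • P.1.rep = (A Q)⁻¹ • Q.1.rep := by
        have h2 : B P / A P = B Q / A Q := by
          have h3 : a * (B P / A P) = a * (B Q / A Q) := by
            simp only at hPQ
            linear_combination hPQ
          exact mul_left_cancel₀ ha h3
        rw [hAB P, hAB Q, smul_add, smul_add, smul_smul, smul_smul, smul_smul, smul_smul,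
          inv_mul_cancel₀ (hA P), inv_mul_cancel₀ (hA Q), inv_mul_eq_div, inv_mul_eq_div, h2]
      apply Subtype.ext
      rw [← P.1.mk_rep, ← Q.1.mk_rep, Projectivization.mk_eq_mk_iff']
      refine ⟨A P * (A Q)⁻¹, ?_⟩
      rw [mul_smul, ← hPQ', smul_smul, mul_inv_cancel₀ (hA P), one_smul]
    have hdvd : ∏ P : T, (Polynomial.X - Polynomial.C (a / A P * B P)) ^ m ∣
        restrictLine (a • u) w f := by
      refine Finset.prod_dvd_of_coprime ?_ ?_
      · intro P _ Q _ hne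
        exact (Polynomial.pairwise_coprime_X_sub_C hinj hne).pow
      · intro P _
        refine X_sub_C_pow_dvd_restrictLine (v := (a / A P) • P.1.rep) ?_
          (hf P.1 P.2 _ (div_ne_zero ha (hA P)))
        rw [hAB P, smul_add, smul_smul, smul_smul, div_mul_cancel₀ _ (hA P)]
    have hz : restrictLine (a • u) w f = 0 := by
      refine Polynomial.eq_zero_of_dvd_of_natDegree_lt hdvd ?_
      refine (natDegree_restrictLine_le _ _ _).trans_lt (hd.trans_eq ?_)
      rw [Polynomial.natDegree_prod_of_monic _ _ fun P _ => (Polynomial.monic_X_sub_C _).pow m]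
      simp only [Polynomial.natDegree_pow, Polynomial.natDegree_X_sub_C, mul_one,
        Finset.sum_const, Finset.card_univ, Fintype.card_coe, smul_eq_mul]
    have := eval_restrictLine (a • u) w b f
    rw [← this, hz, Polynomial.eval_zero]
  intro v hv
  rw [hψ] at hv
  obtain ⟨a, b, rfl⟩ := hspan' v hv
  by_cases ha : a = 0
  · subst ha
    have hz : restrictLine (b • w) u f = 0 := by
      apply Polynomial.eq_zero_of_infinite_isRoot
      refine (Set.finite_singleton (0 : k)).infinite_compl.mono fun z hz => ?_
      rw [Set.mem_ofPred_eq, Polynomial.IsRoot, eval_restrictLine, add_comm]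
      exact hgen z b hz
    have h2 := eval_restrictLine (b • w) u 0 f
    rw [hz, Polynomial.eval_zero, add_comm] at h2
    exact h2.symm
  · exact hgen a b ha

end

theorem le_add_sum_sub_div {t : ℕ} (ht : 0 < t) (s e : ℕ) :
    (s + 1) * t + s ≤ e + ∑ i : Fin t, (2 * s + 1 - e / ((i : ℕ) + 1)) := by
  induction t, ht using Nat.le_induction with
  | base =>
    simp
    omega
  | succ t ht ih =>
    rw [Fin.sum_univ_castSucc]
    simp only [Fin.val_castSucc, Fin.val_last]
    rcases Nat.lt_or_ge s (e / (t + 1)) with h | h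
    · have he : e / (t + 1) * (t + 1) ≤ e := Nat.div_mul_le_self e (t + 1)
      generalize e / (t + 1) = q at h he ⊢
      have hq : (s + 1) * t ≤ q * t := Nat.mul_le_mul_right t h
      have : q * (t + 1) = q * t + q := by ring
      have : (s + 1) * (t + 1) = (s + 1) * t + s + 1 := by ring
      omega
    · have : (s + 1) * (t + 1) = (s + 1) * t + s + 1 := by ring
      omega

/-- Removing lines greedily, each time Bézout's theorem for a line applies, bounds the degree from
below in terms of the degree `e` of the curve that remains. -/
theorem exists_add_sum_le_totalDegree {k : Type*} [Field k] [Infinite k] {t : ℕ}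
    (T : Fin t → Finset (ℙ k (Fin 3 → k))) (φ : Fin t → MvPolynomial (Fin 3) k)
    (hhom : ∀ i, (φ i).IsHomogeneous 1) (hne : ∀ i, φ i ≠ 0) (hT : ∀ i, 0 < (T i).card)
    (honline : ∀ i, ∀ P ∈ T i, MvPolynomial.eval P.rep (φ i) = 0)
    (hoff : ∀ i j, i ≠ j → ∀ P ∈ T i, MvPolynomial.eval P.rep (φ j) ≠ 0)
    (f : MvPolynomial (Fin 3) k) (hf : f ≠ 0) (m : Fin t → ℕ)
    (hm : ∀ i, ∀ P ∈ T i, VanishesToOrder P (m i) f) :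
    ∃ e, e + ∑ i, (m i - e / (T i).card) ≤ f.totalDegree := by
  classical
  induction hd : f.totalDegree generalizing f m with
  | zero =>
    refine ⟨0, ?_⟩
    have hm0 : ∀ i, m i = 0 := by
      intro i
      by_contra hmi
      obtain ⟨g, rfl⟩ := linear_dvd_of_vanishesToOrder (hhom i) (hne i) (T i) (m i) (honline i)
        (hm i) (by rw [hd]; exact Nat.mul_pos (hT i) (Nat.pos_of_ne_zero hmi))
      rw [MvPolynomial.totalDegree_mul_of_isDomain (hne i) (right_ne_zero_of_mul hf),
        (hhom i).totalDegree (hne i)] at hd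
      omega
    simp [hm0]
  | succ d ih =>
    by_cases h : ∃ i, f.totalDegree < (T i).card * m i
    · obtain ⟨i, hi⟩ := h
      obtain ⟨g, rfl⟩ := linear_dvd_of_vanishesToOrder (hhom i) (hne i) (T i) (m i) (honline i)
        (hm i) hi
      have hg := right_ne_zero_of_mul hf
      rw [MvPolynomial.totalDegree_mul_of_isDomain (hne i) hg,
        (hhom i).totalDegree (hne i)] at hd
      obtain ⟨e, he⟩ := ih g hg (Function.update m i (m i - 1)) (by
        intro j P hP
        by_cases hj : j = i
        · subst hj
          rw [Function.update_self]
          exact (hm j P hP).pred_of_linear_mul (hhom j) (hne j) (honline j P hP)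
        · rw [Function.update_of_ne hj]
          exact (hm j P hP).of_linear_mul (hhom i) (hoff j i hj P hP)) (by omega)
      refine ⟨e, ?_⟩
      rw [← Finset.add_sum_erase _ _ (Finset.mem_univ i)] at he ⊢
      rw [Function.update_self, Finset.sum_congr rfl fun j hj => by
        rw [Function.update_of_ne (Finset.ne_of_mem_erase hj)]] at he
      omega
    · push Not at h
      refine ⟨d + 1, ?_⟩
      rw [Finset.sum_eq_zero, add_zero]
      intro i _
      rw [Nat.sub_eq_zero_iff_le, Nat.le_div_iff_mul_le (hT i), mul_comm, ← hd]
      exact h i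

theorem stmt16 (k : Type*) [Field k] [IsAlgClosed k] [CharZero k]
    (t : ℕ) (ht : 0 < t)
    (W : Finset (ℙ k (Fin 3 → k)))
    (T : Fin t → Finset (ℙ k (Fin 3 → k)))
    (φ : Fin t → MvPolynomial (Fin 3) k)
    (hhom : ∀ i, (φ i).IsHomogeneous 1)
    (hne : ∀ i, φ i ≠ 0)
    (hprop : ∀ i j, i ≠ j → ∀ a : k, φ i ≠ a • φ j)
    (hW : ∀ P, P ∈ W ↔ ∃ i, P ∈ T i)
    (hcard : ∀ i : Fin t, (T i).card = (i : ℕ) + 1)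
    (honline : ∀ i, ∀ P ∈ T i, MvPolynomial.eval (Projectivization.rep P) (φ i) = 0)
    (hone : ∀ P ∈ W, ∀ i j : Fin t, i ≠ j →
      ¬(MvPolynomial.eval (Projectivization.rep P) (φ i) = 0 ∧
        MvPolynomial.eval (Projectivization.rep P) (φ j) = 0))
    (r : ℕ) (hr : 1 ≤ r) :
    r * alphaDeg k (fatIdeal k W 1) + (r - 1) ≤ alphaDeg k (fatIdeal k W (2 * r - 1)) := by
  have hoff : ∀ i j, i ≠ j → ∀ P ∈ T i, MvPolynomial.eval P.rep (φ j) ≠ 0 :=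
    fun i j hij P hP h0 => hone P ((hW P).2 ⟨i, hP⟩) i j hij ⟨honline i P hP, h0⟩
  have hprod : ∀ n, ∃ f ∈ fatIdeal k W n, f ≠ 0 ∧ f.IsHomogeneous (t * n) := by
    intro n
    refine ⟨(∏ i, φ i) ^ n, ?_, pow_ne_zero _ (Finset.prod_ne_zero_iff.2 fun i _ => hne i), ?_⟩
    · simp only [fatIdeal, Ideal.mem_iInf]
      intro P hP
      obtain ⟨i, hi⟩ := (hW P).1 hP
      refine Ideal.pow_mem_pow (Ideal.mem_of_dvd _ (Finset.dvd_prod_of_mem φ (Finset.mem_univ i))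
        ?_) n
      intro c
      obtain ⟨ψ, hψ⟩ := exists_linearMap_eval_eq (hhom i)
      rw [hψ, map_smul, ← hψ, honline i P hi, smul_zero]
    · simpa using (MvPolynomial.IsHomogeneous.prod Finset.univ φ (fun _ => 1)
        fun i _ => hhom i).pow n
  have hupper : alphaDeg k (fatIdeal k W 1) ≤ t := by
    refine Nat.sInf_le ?_
    simpa using hprod 1
  obtain ⟨s, rfl⟩ : ∃ s, r = s + 1 := ⟨r - 1, by omega⟩
  refine le_csInf ⟨_, hprod _⟩ ?_
  rintro d ⟨f, hf, hf0, hfd⟩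
  obtain ⟨e, he⟩ := exists_add_sum_le_totalDegree T φ hhom hne (fun i => by rw [hcard]; omega)
    honline hoff f hf0 (fun _ => 2 * s + 1) (by
      intro i P hP
      simp only [fatIdeal, Ideal.mem_iInf] at hf
      exact vanishesToOrder_of_mem_pow (hf P ((hW P).2 ⟨i, hP⟩)))
  simp only [hcard, hfd.totalDegree hf0] at he
  have h1 := le_add_sum_sub_div ht s e
  have h2 : (s + 1) * alphaDeg k (fatIdeal k W 1) ≤ (s + 1) * t := Nat.mul_le_mul_left _ hupper
  omega
end

section
/- Let W ⊂ P^2 be a line count configuration of type (c_1, c_2, …, c_t) over an algebraically closed field k of characteristic 0, where 1 ≤ c_1 ≤ c_2 ≤ ⋯ ≤ c_t and c_i ≥ i for all 1 ≤ i ≤ t. Then for every integer r ≥ 1, α((2r−1)W) ≥ r·α(W) + (r−1). -/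
open scoped LinearAlgebra.Projectivization

section FatPoints

open MvPolynomial

variable {k : Type*} [Field k]

theorem isHomogeneous_one_eq_sum {φ : MvPolynomial (Fin 3) k} (h : φ.IsHomogeneous 1) :
    ∃ a : Fin 3 → k, φ = ∑ i, C (a i) * X i := by
  have h' : φ ∈ homogeneousSubmodule (Fin 3) k 1 := h
  rw [homogeneousSubmodule_one_eq_span_X, Submodule.mem_span_range_iff_exists_fun] at h'
  obtain ⟨a, ha⟩ := h'
  exact ⟨a, by simp only [← ha, smul_eq_C_mul]⟩

/-- A homogeneous polynomial scales with the power given by its degree. -/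
theorem MvPolynomial.IsHomogeneous.aeval_mul_left {A : Type*} [CommRing A] [Algebra k A]
    {f : MvPolynomial (Fin 3) k} {d : ℕ} (h : f.IsHomogeneous d) (b : A) (g : Fin 3 → A) :
    MvPolynomial.aeval (fun i => b * g i) f = b ^ d * MvPolynomial.aeval g f := by
  rw [aeval_def, aeval_def, eval₂_eq', eval₂_eq', Finset.mul_sum]
  refine Finset.sum_congr rfl fun s hs => ?_
  have hd : ∑ i, s i = d := by
    have := h.degree_eq_sum_deg_support hs
    rw [this]
    exact (Finset.sum_subset (Finset.subset_univ _) (by simp)).symm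
  simp only [mul_pow, Finset.prod_mul_distrib, Finset.prod_pow_eq_pow_sum, hd]
  ring

theorem MvPolynomial.IsHomogeneous.eval_smul {f : MvPolynomial (Fin 3) k} {d : ℕ}
    (h : f.IsHomogeneous d) (b : k) (v : Fin 3 → k) :
    eval (b • v) f = b ^ d * eval v f :=
  h.aeval_mul_left b v

theorem MvPolynomial.IsHomogeneous.right_of_mul {φ g : MvPolynomial (Fin 3) k} {d : ℕ}
    (hφ : φ.IsHomogeneous 1) (hφ0 : φ ≠ 0) (hg0 : g ≠ 0) (h : (φ * g).IsHomogeneous d) :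
    ∃ e, e + 1 = d ∧ g.IsHomogeneous e := by
  have hd : d = g.totalDegree + 1 := by
    rw [← h.totalDegree (mul_ne_zero hφ0 hg0), totalDegree_mul_of_isDomain hφ0 hg0,
      hφ.totalDegree hφ0, add_comm]
  refine ⟨g.totalDegree, hd.symm, ?_⟩
  let _ : GradedAlgebra (homogeneousSubmodule (Fin 3) k) := gradedAlgebra
  have key := DirectSum.coe_decompose_mul_of_left_mem (homogeneousSubmodule (Fin 3) k) d
    (i := 1) (a := φ) (b := g) hφ
  rw [DirectSum.decompose_of_mem_same _ h, if_pos (by omega)] at key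
  have hmem := (DirectSum.decompose (homogeneousSubmodule (Fin 3) k) g (d - 1)).2
  rwa [← mul_left_cancel₀ hφ0 key, show d - 1 = g.totalDegree by omega] at hmem

/-- The Taylor expansion of a polynomial at `v`, as a polynomial in a scaling parameter:
`f(v + X Y)` with `Y` the original variables. -/
noncomputable def taylorAt (v : Fin 3 → k) :
    MvPolynomial (Fin 3) k →ₐ[k] Polynomial (MvPolynomial (Fin 3) k) :=
  aeval fun i => Polynomial.C (C (v i)) + Polynomial.X * Polynomial.C (X i)

theorem taylorAt_coeff_zero (v : Fin 3 → k) (f : MvPolynomial (Fin 3) k) :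
    (taylorAt v f).coeff 0 = C (eval v f) := by
  rw [Polynomial.coeff_zero_eq_eval_zero]
  induction f using MvPolynomial.induction_on with
  | C a => simp [taylorAt, algebraMap_eq]
  | add p q hp hq => simp [hp, hq]
  | mul_X p i hp => rw [map_mul, Polynomial.eval_mul, hp]; simp [taylorAt]

theorem taylorAt_linear (v : Fin 3 → k) {φ : MvPolynomial (Fin 3) k} (h : φ.IsHomogeneous 1) :
    taylorAt v φ = Polynomial.C (C (eval v φ)) + Polynomial.X * Polynomial.C φ := by
  obtain ⟨a, rfl⟩ := isHomogeneous_one_eq_sum h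
  simp [taylorAt, Fin.sum_univ_three, algebraMap_eq]
  ring

/-- Specializing the Taylor expansion to the direction `w`, with parameter `X - a`. -/
theorem eval₂_taylorAt (v w : Fin 3 → k) (a : k) (f : MvPolynomial (Fin 3) k) :
    Polynomial.eval₂ (aeval (R := k) fun i => Polynomial.C (w i)).toRingHom
      (Polynomial.X - Polynomial.C a) (taylorAt v f) =
    aeval (fun i => Polynomial.C (v i) + (Polynomial.X - Polynomial.C a) * Polynomial.C (w i))
      f := by
  induction f using MvPolynomial.induction_on with
  | C b => simp [taylorAt, algebraMap_eq]
  | add p q hp hq => simp only [map_add, Polynomial.eval₂_add, hp, hq]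
  | mul_X p i hp =>
    rw [map_mul, Polynomial.eval₂_mul, hp, map_mul]
    congr 1
    simp [taylorAt, Polynomial.eval₂_add, Polynomial.eval₂_mul]
    exact mul_comm _ _

theorem X_pow_dvd_taylorAt {P : ℙ k (Fin 3 → k)} {f : MvPolynomial (Fin 3) k} {m : ℕ}
    (h : f ∈ pointIdeal k P ^ m) : Polynomial.X ^ m ∣ taylorAt P.rep f := by
  have hle : pointIdeal k P ≤ (Ideal.span {Polynomial.X}).comap (taylorAt P.rep).toRingHom := by
    intro g hg
    have hg1 : eval P.rep g = 0 := by simpa using hg 1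
    rw [Ideal.mem_comap, Ideal.mem_span_singleton, Polynomial.X_dvd_iff]
    exact (taylorAt_coeff_zero _ _).trans (by rw [hg1, C_0])
  have := Ideal.le_comap_pow _ m (Ideal.pow_right_mono hle m h)
  rwa [Ideal.mem_comap, Ideal.span_singleton_pow, Ideal.mem_span_singleton] at this

theorem X_pow_dvd_taylorAt_of_mul {v : Fin 3 → k} {φ g : MvPolynomial (Fin 3) k} {m : ℕ}
    (hv : eval v φ ≠ 0) (h : Polynomial.X ^ m ∣ taylorAt v (φ * g)) : Polynomial.X ^ m ∣ taylorAt v g := by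
  rw [map_mul] at h
  refine Polynomial.prime_X.pow_dvd_of_dvd_mul_left m ?_ h
  rw [Polynomial.X_dvd_iff, taylorAt_coeff_zero]
  simpa using hv

theorem X_pow_dvd_taylorAt_of_mul_succ {v : Fin 3 → k} {φ g : MvPolynomial (Fin 3) k} {m : ℕ}
    (hφ : φ.IsHomogeneous 1) (hφ0 : φ ≠ 0) (hv : eval v φ = 0)
    (h : Polynomial.X ^ (m + 1) ∣ taylorAt v (φ * g)) : Polynomial.X ^ m ∣ taylorAt v g := by
  rw [map_mul, taylorAt_linear v hφ, hv, C_0, Polynomial.C_0, zero_add, pow_succ', mul_assoc] at h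
  have h' := (mul_dvd_mul_iff_left Polynomial.X_ne_zero).1 h
  refine Polynomial.prime_X.pow_dvd_of_dvd_mul_left m ?_ h'
  rw [Polynomial.X_dvd_iff, Polynomial.coeff_C_zero]
  exact hφ0

theorem eval_aeval_polynomial (g : Fin 3 → Polynomial k) (s : k) (f : MvPolynomial (Fin 3) k) :
    Polynomial.eval s (aeval g f) = eval (fun i => Polynomial.eval s (g i)) f := by
  induction f using MvPolynomial.induction_on with
  | C b => simp
  | add p q hp hq => simp only [map_add, Polynomial.eval_add, hp, hq]
  | mul_X p i hp => simp only [map_mul, Polynomial.eval_mul, hp, aeval_X, eval_X]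

/-- A polynomial vanishing on the zero locus of a nonzero linear form is divisible by it. -/
theorem dvd_of_eval_eq_zero [Infinite k] {φ f : MvPolynomial (Fin 3) k}
    (hφ : φ.IsHomogeneous 1) (hφ0 : φ ≠ 0)
    (h : ∀ w, eval w φ = 0 → eval w f = 0) : φ ∣ f := by
  obtain ⟨a, rfl⟩ := isHomogeneous_one_eq_sum hφ
  obtain ⟨j, hj⟩ : ∃ j, a j ≠ 0 := by
    by_contra! hc
    exact hφ0 (by simp [hc])
  set φ : MvPolynomial (Fin 3) k := ∑ i, C (a i) * X i with hφdef
  let ψ : MvPolynomial (Fin 3) k →ₐ[k] MvPolynomial (Fin 3) k :=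
    aeval fun i => X i - C (if i = j then (a j)⁻¹ else 0) * φ
  have hψ : ∀ g, φ ∣ g - ψ g := by
    intro g
    induction g using MvPolynomial.induction_on with
    | C b => simp [ψ, algebraMap_eq]
    | add p q hp hq =>
      rw [map_add, add_sub_add_comm]
      exact dvd_add hp hq
    | mul_X p i hp =>
      have : p * X i - ψ (p * X i) = (p - ψ p) * X i +
          ψ p * C (if i = j then (a j)⁻¹ else 0) * φ := by
        simp only [map_mul, ψ, aeval_X]
        ring
      rw [this]
      exact dvd_add (hp.mul_right _) (Dvd.intro_left _ rfl)
  have h0 : ψ f = 0 := by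
    refine MvPolynomial.funext fun x => ?_
    have hev : ∀ g, eval x (ψ g) =
        eval (fun i => x i - (if i = j then (a j)⁻¹ else 0) * eval x φ) g := by
      intro g
      induction g using MvPolynomial.induction_on with
      | C b => simp [ψ, algebraMap_eq]
      | add p q hp hq => simp only [map_add, hp, hq]
      | mul_X p i hp => rw [map_mul, map_mul, hp, map_mul]; simp [ψ]
    rw [hev, map_zero]
    apply h
    have : eval x φ = ∑ i, a i * x i := by simp [hφdef]
    rw [hφdef, map_sum]
    simp only [map_mul, eval_C, eval_X, mul_sub, Finset.sum_sub_distrib]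
    rw [← this]
    simp [hj, this]
  simpa [h0] using hψ f

theorem exists_eq_smul_add_smul {φ : MvPolynomial (Fin 3) k} (hφ : φ.IsHomogeneous 1)
    (hφ0 : φ ≠ 0) {u w v : Fin 3 → k} (hu : eval u φ = 0) (hw : eval w φ = 0)
    (hv : eval v φ = 0) (hu0 : u ≠ 0) (huw : ∀ s : k, w ≠ s • u) :
    ∃ α β : k, v = α • w + β • u := by
  obtain ⟨a, rfl⟩ := isHomogeneous_one_eq_sum hφ
  have ha : a ≠ 0 := by
    rintro rfl
    simp at hφ0
  have hdet : (Matrix.of ![u, w, v]).det = 0 := by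
    rw [← Matrix.exists_mulVec_eq_zero_iff]
    refine ⟨a, ha, ?_⟩
    funext i
    simp only [map_sum, map_mul, eval_C, eval_X] at hu hw hv
    simp only [mul_comm (a _)] at hu hw hv
    fin_cases i <;> simpa [Matrix.mulVec, dotProduct]
  obtain ⟨x, hx0, hx⟩ := Matrix.exists_vecMul_eq_zero_iff.2 hdet
  have hx' : x 0 • u + x 1 • w + x 2 • v = 0 := by
    funext j
    have := congrFun hx j
    simpa [Matrix.vecMul, dotProduct, Fin.sum_univ_three] using this
  have h2 : x 2 ≠ 0 := by
    intro h2
    rw [h2, zero_smul, add_zero] at hx'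
    have h1 : x 1 = 0 := by
      by_contra h1
      refine huw (-(x 1)⁻¹ * x 0) ?_
      have : w = (x 1)⁻¹ • x 1 • w := by rw [smul_smul, inv_mul_cancel₀ h1, one_smul]
      rw [this, eq_neg_of_add_eq_zero_right hx', smul_neg, smul_smul, neg_mul, neg_smul]
    rw [h1, zero_smul, add_zero, smul_eq_zero, or_iff_left hu0] at hx'
    apply hx0
    funext i
    fin_cases i <;> assumption
  refine ⟨-(x 2)⁻¹ * x 1, -(x 2)⁻¹ * x 0, ?_⟩
  have : v = (x 2)⁻¹ • x 2 • v := by rw [smul_smul, inv_mul_cancel₀ h2, one_smul]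
  rw [this, eq_neg_of_add_eq_zero_right hx']
  module

/-- A form of degree `d` with multiplicity at least `m` at more than `d / m` points of a line
vanishes on that line. -/
theorem eval_eq_zero_of_line [Infinite k] {φ f : MvPolynomial (Fin 3) k} {d m : ℕ}
    (hφ : φ.IsHomogeneous 1) (hφ0 : φ ≠ 0) (hf : f.IsHomogeneous d)
    (T : Finset (ℙ k (Fin 3 → k))) (hT : ∀ P ∈ T, eval P.rep φ = 0)
    (hm : ∀ P ∈ T, Polynomial.X ^ m ∣ taylorAt P.rep f) (hd : d < m * T.card)
    {w : Fin 3 → k} (hw : eval w φ = 0) : eval w f = 0 := by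
  have hm0 : m ≠ 0 := by rintro rfl; simp at hd
  by_cases hex : ∃ P ∈ T, ∃ s : k, w = s • P.rep
  · obtain ⟨P, hP, s, rfl⟩ := hex
    rw [hf.eval_smul]
    have := (dvd_pow_self _ hm0).trans (hm P hP)
    rw [Polynomial.X_dvd_iff, taylorAt_coeff_zero, C_eq_zero] at this
    rw [this, mul_zero]
  push Not at hex
  obtain ⟨P₀, hP₀⟩ : T.Nonempty := by
    rw [← Finset.card_pos]
    exact Nat.pos_of_ne_zero (by rintro h; simp [h] at hd)
  set u := P₀.rep with hu
  have hcomb : ∀ P ∈ T, ∃ a b : k, b ≠ 0 ∧ P.rep = b • (u + a • w) := by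
    intro P hP
    obtain ⟨α, β, hαβ⟩ := exists_eq_smul_add_smul hφ hφ0 (hT P₀ hP₀) hw (hT P hP)
      P₀.rep_nonzero (hex P₀ hP₀)
    have hβ : β ≠ 0 := by
      rintro rfl
      rw [zero_smul, add_zero] at hαβ
      have hα : α ≠ 0 := by
        rintro rfl
        exact P.rep_nonzero (by rw [hαβ, zero_smul])
      exact hex P hP α⁻¹ (by rw [hαβ, smul_smul, inv_mul_cancel₀ hα, one_smul])
    refine ⟨β⁻¹ * α, β, hβ, ?_⟩
    rw [hαβ, smul_add, smul_smul, mul_inv_cancel_left₀ hβ, add_comm]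
  choose! a b hb hab using hcomb
  have hinj : Set.InjOn a T := by
    intro P hP Q hQ h
    rw [← P.mk_rep, ← Q.mk_rep, Projectivization.mk_eq_mk_iff']
    refine ⟨b P * (b Q)⁻¹, ?_⟩
    rw [hab P hP, hab Q hQ, h, smul_smul, inv_mul_cancel_right₀ (hb Q hQ)]
  set p : Polynomial k :=
    aeval (fun i => Polynomial.C (u i) + Polynomial.X * Polynomial.C (w i)) f with hp
  have hdvd : ∀ P ∈ T, (Polynomial.X - Polynomial.C (a P)) ^ m ∣ p := by
    intro P hP
    have h1 := map_dvd (Polynomial.eval₂RingHom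
      (aeval (R := k) fun i => Polynomial.C ((b P • w) i)).toRingHom
      (Polynomial.X - Polynomial.C (a P))) (hm P hP)
    rw [Polynomial.coe_eval₂RingHom, eval₂_taylorAt, Polynomial.eval₂_pow,
      Polynomial.eval₂_X] at h1
    have h2 : (fun i => Polynomial.C (P.rep i) +
        (Polynomial.X - Polynomial.C (a P)) * Polynomial.C ((b P • w) i)) =
        fun i => Polynomial.C (b P) *
          (Polynomial.C (u i) + Polynomial.X * Polynomial.C (w i)) := by
      funext i
      rw [hab P hP]
      simp only [Pi.smul_apply, Pi.add_apply, smul_eq_mul, map_mul, map_add]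
      ring
    rw [h2, hf.aeval_mul_left, ← Polynomial.C_pow] at h1
    exact (IsUnit.dvd_mul_left (Polynomial.isUnit_C.2 ((hb P hP).isUnit.pow d))).1 h1
  have hp0 : p = 0 := by
    by_contra hne
    have hprod : ∏ P ∈ T, (Polynomial.X - Polynomial.C (a P)) ^ m ∣ p := by
      refine Finset.prod_dvd_of_coprime (fun P hP Q hQ hPQ => ?_) hdvd
      refine IsCoprime.pow ?_
      exact Polynomial.isCoprime_X_sub_C_of_isUnit_sub
        (sub_ne_zero.2 fun h => hPQ (hinj hP hQ h)).isUnit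
    have hdeg := Polynomial.natDegree_le_of_dvd hprod hne
    rw [Polynomial.natDegree_prod_of_monic _ _
      fun P _ => (Polynomial.monic_X_sub_C _).pow _] at hdeg
    simp only [Polynomial.natDegree_pow, Polynomial.natDegree_X_sub_C, mul_one,
      Finset.sum_const, smul_eq_mul] at hdeg
    have hpd : p.natDegree ≤ d * 1 := by
      refine aeval_natDegree_le f hf.totalDegree_le _ fun i => ?_
      compute_degree
    rw [mul_comm] at hdeg
    omega
  have hps (s : k) : eval (u + s • w) f = 0 := by
    have : Polynomial.eval s p = eval (u + s • w) f := by
      rw [hp, eval_aeval_polynomial]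
      congr 2
      funext i
      simp [-Polynomial.X_mul_C, mul_comm s]
    rw [← this, hp0, Polynomial.eval_zero]
  set q : Polynomial k :=
    aeval (fun i => Polynomial.C (w i) + Polynomial.X * Polynomial.C (u i)) f with hq
  have hqs (s : k) : Polynomial.eval s q = eval (w + s • u) f := by
    rw [hq, eval_aeval_polynomial]
    congr 2
    funext i
    simp [-Polynomial.X_mul_C, mul_comm s]
  have hXq : Polynomial.X * q = 0 := by
    refine Polynomial.funext fun s => ?_
    rw [Polynomial.eval_mul, Polynomial.eval_X, hqs, Polynomial.eval_zero]
    rcases eq_or_ne s 0 with rfl | hs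
    · rw [zero_mul]
    · have : w + s • u = s • (u + s⁻¹ • w) := by
        rw [smul_add, smul_smul, mul_inv_cancel₀ hs, one_smul, add_comm]
      rw [this, hf.eval_smul, hps, mul_zero, mul_zero]
  have hq0 : q = 0 := (mul_eq_zero.1 hXq).resolve_left Polynomial.X_ne_zero
  simpa [hq0] using (hqs 0).symm

/-- There is a nonzero form of degree `d` with multiplicity at least `μ i` at each point
of `T i`. -/
def HasForm {t : ℕ} (T : Fin t → Finset (ℙ k (Fin 3 → k))) (d : ℕ) (μ : Fin t → ℕ) : Prop :=
  ∃ f : MvPolynomial (Fin 3) k, f ≠ 0 ∧ f.IsHomogeneous d ∧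
    ∀ i, ∀ P ∈ T i, Polynomial.X ^ μ i ∣ taylorAt P.rep f

/-- The data of a line count configuration: linear forms `φ i` vanishing on `T i` and at no other
point. -/
structure IsLineConfig {t : ℕ} (T : Fin t → Finset (ℙ k (Fin 3 → k)))
    (φ : Fin t → MvPolynomial (Fin 3) k) : Prop where
  hom : ∀ i, (φ i).IsHomogeneous 1
  ne_zero : ∀ i, φ i ≠ 0
  eval_eq : ∀ i, ∀ P ∈ T i, eval P.rep (φ i) = 0
  eval_ne : ∀ i j, i ≠ j → ∀ P ∈ T j, eval P.rep (φ i) ≠ 0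

variable {t : ℕ} {T : Fin t → Finset (ℙ k (Fin 3 → k))} {φ : Fin t → MvPolynomial (Fin 3) k}

/-- Splitting off one line by Bézout's theorem. -/
theorem HasForm.split [Infinite k] (hL : IsLineConfig T φ) {d : ℕ} {μ : Fin t → ℕ}
    (h : HasForm T d μ) (i : Fin t) {m : ℕ} (hμ : μ i = m + 1) (hd : d < μ i * (T i).card) :
    ∃ e, e + 1 = d ∧ HasForm T e (Function.update μ i m) := by
  obtain ⟨f, hf0, hf, hm⟩ := h
  obtain ⟨g, rfl⟩ := dvd_of_eval_eq_zero (hL.hom i) (hL.ne_zero i) fun w hw =>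
    eval_eq_zero_of_line (hL.hom i) (hL.ne_zero i) hf (T i) (hL.eval_eq i) (hm i) hd hw
  have hg0 : g ≠ 0 := right_ne_zero_of_mul hf0
  obtain ⟨e, he, hg⟩ := (hL.hom i).right_of_mul (hL.ne_zero i) hg0 hf
  refine ⟨e, he, g, hg0, hg, fun j P hP => ?_⟩
  rcases eq_or_ne j i with rfl | hj
  · rw [Function.update_self]
    exact X_pow_dvd_taylorAt_of_mul_succ (hL.hom j) (hL.ne_zero j) (hL.eval_eq j P hP)
      (hμ ▸ hm j P hP)
  · rw [Function.update_of_ne hj]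
    exact X_pow_dvd_taylorAt_of_mul (hL.eval_ne i j hj.symm P hP) (hm j P hP)

/-- Splitting off one line repeatedly. -/
theorem HasForm.split_iterate [Infinite k] (hL : IsLineConfig T φ) (i : Fin t)
    (hcard : 1 ≤ (T i).card) (a n : ℕ) :
    ∀ {d : ℕ} {μ : Fin t → ℕ}, HasForm T d μ → μ i = a + n →
      d + 2 ≤ (a + 1) * (T i).card + n →
      ∃ e, e + n = d ∧ HasForm T e (Function.update μ i a) := by
  induction n with
  | zero =>
    intro d μ h hμ _
    refine ⟨d, rfl, ?_⟩
    rwa [← add_zero a, ← hμ, Function.update_eq_self]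
  | succ n ih =>
    intro d μ h hμ hd
    have hlt : d < μ i * (T i).card := by
      rw [hμ]
      nlinarith [Nat.mul_le_mul_left n hcard]
    obtain ⟨e, rfl, he⟩ := h.split hL i (m := a + n) hμ hlt
    obtain ⟨e', rfl, he'⟩ := ih he (Function.update_self ..) (by omega)
    exact ⟨e', by omega, by rwa [Function.update_idem] at he'⟩

/-- Splitting off each of the last `n` lines `r` times. -/
theorem HasForm.split_lines [Infinite k] (hL : IsLineConfig T φ)
    (hcard : ∀ i : Fin t, (i : ℕ) + 1 ≤ (T i).card) {r d : ℕ} (hd : d + 2 ≤ (r + 1) * (t + 1))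
    (h : HasForm T d fun _ => r + (r + 1)) (n : ℕ) (hn : n ≤ t) :
    ∃ e, e + (r + 1) * n = d ∧
      HasForm T e fun i => if (i : ℕ) < t - n then r + (r + 1) else r := by
  induction n with
  | zero => exact ⟨d, by simp, by simpa using h⟩
  | succ n ih =>
    obtain ⟨e, he, hform⟩ := ih (by omega)
    obtain ⟨s, rfl⟩ : ∃ s, t = s + (n + 1) := ⟨t - (n + 1), by omega⟩
    let i : Fin (s + (n + 1)) := ⟨s, by omega⟩
    have hi := hcard i
    obtain ⟨e', he', hform'⟩ := hform.split_iterate hL i (by omega) r (r + 1)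
      (by rw [if_pos]; simp only [i]; omega)
      (by
        have := Nat.mul_le_mul_left (r + 1) hi
        simp only [i] at this ⊢
        nlinarith)
    refine ⟨e', by rw [← he, ← he']; ring, ?_⟩
    convert hform' using 1
    funext j
    rcases eq_or_ne j i with rfl | hj
    · simp [i]
    · rw [Function.update_of_ne hj]
      have : (j : ℕ) ≠ s := fun h => hj (Fin.ext h)
      congr 1
      simp only [eq_iff_iff]
      omega

theorem HasForm.le_degree [Infinite k] (hL : IsLineConfig T φ) (ht : 0 < t)
    (hcard : ∀ i : Fin t, (i : ℕ) + 1 ≤ (T i).card) {r d : ℕ}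
    (h : HasForm T d fun _ => r + (r + 1)) : (r + 1) * t + r ≤ d := by
  by_contra! hlt
  obtain ⟨e, he, hform⟩ := h.split_lines hL hcard (by rw [mul_add]; omega) t le_rfl
  have hc := hcard ⟨0, ht⟩
  obtain ⟨e', he', -⟩ := hform.split_iterate hL ⟨0, ht⟩ (by omega) 0 r (by simp) (by omega)
  omega

end FatPoints

theorem stmt18 (k : Type*) [Field k] [IsAlgClosed k] [CharZero k]
    (t : ℕ) (ht : 0 < t)
    (c : Fin t → ℕ) (hc1 : ∀ i, 1 ≤ c i) (hcmono : Monotone c)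
    (hci : ∀ i : Fin t, (i : ℕ) + 1 ≤ c i)
    (W : Finset (ℙ k (Fin 3 → k)))
    (T : Fin t → Finset (ℙ k (Fin 3 → k)))
    (φ : Fin t → MvPolynomial (Fin 3) k)
    (hhom : ∀ i, (φ i).IsHomogeneous 1)
    (hne : ∀ i, φ i ≠ 0)
    (hprop : ∀ i j, i ≠ j → ∀ a : k, φ i ≠ a • φ j)
    (hW : ∀ P, P ∈ W ↔ ∃ i, P ∈ T i)
    (hcard : ∀ i : Fin t, (T i).card = c i)
    (honline : ∀ i, ∀ P ∈ T i, MvPolynomial.eval (Projectivization.rep P) (φ i) = 0)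
    (hone : ∀ P ∈ W, ∀ i j : Fin t, i ≠ j →
      ¬(MvPolynomial.eval (Projectivization.rep P) (φ i) = 0 ∧
        MvPolynomial.eval (Projectivization.rep P) (φ j) = 0))
    (r : ℕ) (hr : 1 ≤ r) :
    r * alphaDeg k (fatIdeal k W 1) + (r - 1) ≤ alphaDeg k (fatIdeal k W (2 * r - 1)) := by
  have hL : IsLineConfig T φ := by
    refine ⟨hhom, hne, honline, fun i j hij P hP h => ?_⟩
    exact hone P ((hW P).2 ⟨j, hP⟩) i j hij ⟨h, honline j P hP⟩
  have hmem : ∀ m, (∏ i, φ i) ^ m ∈ fatIdeal k W m := by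
    intro m
    rw [fatIdeal]
    simp only [Ideal.mem_iInf]
    intro P hP
    obtain ⟨i, hi⟩ := (hW P).1 hP
    refine Ideal.pow_mem_pow ?_ m
    refine Ideal.mem_of_dvd _ (Finset.dvd_prod_of_mem φ (Finset.mem_univ i)) fun b => ?_
    rw [(hhom i).eval_smul, honline i P hi, mul_zero]
  have hne' : ∏ i, φ i ≠ 0 := Finset.prod_ne_zero_iff.2 fun i _ => hne i
  have hhom' : (∏ i, φ i).IsHomogeneous t := by
    simpa using MvPolynomial.IsHomogeneous.prod Finset.univ φ (fun _ => 1) fun i _ => hhom i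
  have hα : alphaDeg k (fatIdeal k W 1) ≤ t :=
    Nat.sInf_le ⟨_, by simpa using hmem 1, hne', hhom'⟩
  obtain ⟨f, hf, hf0, hfd⟩ := Nat.sInf_mem (s := {d : ℕ | ∃ f ∈ fatIdeal k W (2 * r - 1),
    f ≠ 0 ∧ MvPolynomial.IsHomogeneous f d}) ⟨_, _, hmem _, pow_ne_zero _ hne', hhom'.pow _⟩
  obtain ⟨r, rfl⟩ : ∃ s, r = s + 1 := ⟨r - 1, by omega⟩
  have hform : HasForm T (alphaDeg k (fatIdeal k W (2 * (r + 1) - 1)))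
      fun _ => r + (r + 1) := by
    refine ⟨f, hf0, hfd, fun i P hP => X_pow_dvd_taylorAt ?_⟩
    rw [fatIdeal] at hf
    simp only [Ideal.mem_iInf] at hf
    have := hf P ((hW P).2 ⟨i, hP⟩)
    rwa [show 2 * (r + 1) - 1 = r + (r + 1) by omega] at this
  have hle := hform.le_degree hL ht fun i => (hcard i).symm ▸ hci i
  exact (Nat.add_le_add_right (Nat.mul_le_mul_left (r + 1) hα) r).trans hle
end
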